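/- If ξ = (E, B, F, p) is a fibre bundle whose base space B is paracompact and Hausdorff, then the projection p : E → B is a fibration. -/

import Mathlib

/-!
STATEMENT 1: If `ξ = (E, B, F, p)` is a fibre bundle whose base `B` is paracompact and
Hausdorff, then the projection `p : E → B` is a fibration.
-/

open unitInterval ContinuousMap

universe u v

noncomputable section

/-- Homotopy lifting property of `p` with respect to `Y`. -/
def HasHLP {E B : Type*} [TopologicalSpace E] [TopologicalSpace B]
    (p : C(E, B)) (Y : Type*) [TopologicalSpace Y] : Prop :=
  ∀ (f : C(Y, E)) (h : C(Y × unitInterval, B)),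
    (∀ y, h (y, 0) = p (f y)) →
    ∃ h' : C(Y × unitInterval, E),
      (∀ z, p (h' z) = h z) ∧ (∀ y, h' (y, 0) = f y)

/-- A (Hurewicz) fibration: HLP with respect to every topological space. -/
def IsFibration {E B : Type*} [TopologicalSpace E] [TopologicalSpace B] (p : C(E, B)) : Prop :=
  ∀ (Y : Type v) [TopologicalSpace Y], HasHLP p Y

/-- `p : E → B` is the projection of a fibre bundle with fibre `F`: it is locally
trivial, i.e. every point of `B` has an open neighbourhood `U` admitting a homeomorphism
`φ : U × F ≃ p⁻¹(U)` with `p (φ (b, x)) = b`. -/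
def IsFibreBundleProj (F : Type*) [TopologicalSpace F] {E B : Type*}
    [TopologicalSpace E] [TopologicalSpace B] (p : C(E, B)) : Prop :=
  ∀ b : B, ∃ U : Set B, IsOpen U ∧ b ∈ U ∧
    ∃ φ : (U × F) ≃ₜ (p ⁻¹' U : Set E), ∀ (u : U) (x : F), p (φ (u, x)) = (u : B)

/-!
A local trivialization over `U` lets one move a point `e` over `U` to the point over any other
`b ∈ U` with the same fibre coordinate; this slicing function leaves `e` alone when `b = p e`.

First let each track `u ↦ Γ (z, u)` of a homotopy stay inside one chart. Normalizing the minima of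
a partition of unity along the tracks gives weights `w j` such that `w j z ≠ 0` only if the track
of `z` stays in the chart `j`. Fix a linear order of the charts. A point over `Γ (z, 0)` is carried
to the fibre over `Γ (z, 1)` by letting the charts act in turn, the `j`-th one advancing the time by
`w j z`. Only finitely many charts act near a given point, so the result is continuous, and it is
stationary wherever the track is constant.

For an arbitrary homotopy `h : Y × I → B` there is a continuous `δ > 0` on `Y` such that `h (y, ·)`
maps every time interval of length `δ y` into one chart. Lift successively along the times
`min t (n * δ y)`: near every point these become constantly `t`, so the lifts stabilize there.
-/

open Set Filter Topology

section FiberwiseMin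

variable {Z K α : Type*} [TopologicalSpace Z] [TopologicalSpace K] [CompactSpace K]
  [ConditionallyCompleteLinearOrder α] [TopologicalSpace α] [OrderTopology α]

/-- The minimum of a continuous function on `Z × K` over the compact factor `K`, as a continuous
function on `Z`. It is a junk value if `K` is empty. -/
def fiberwiseMin (f : C(Z × K, α)) : C(Z, α) where
  toFun z := sInf (range fun u => f (z, u))
  continuous_toFun := by
    simpa only [image_univ] using
      isCompact_univ.continuous_sInf (f := fun z u => f (z, u)) f.continuous

variable [Nonempty K]

lemma isLeast_fiberwiseMin (f : C(Z × K, α)) (z : Z) :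
    IsLeast (range fun u => f (z, u)) (fiberwiseMin f z) :=
  (isCompact_range (by fun_prop)).isLeast_sInf (range_nonempty _)

lemma fiberwiseMin_le (f : C(Z × K, α)) (z : Z) (u : K) : fiberwiseMin f z ≤ f (z, u) :=
  (isLeast_fiberwiseMin f z).2 (mem_range_self u)

lemma lt_fiberwiseMin_iff {f : C(Z × K, α)} {z : Z} {a : α} :
    a < fiberwiseMin f z ↔ ∀ u, a < f (z, u) := by
  rw [(isLeast_fiberwiseMin f z).lt_iff, forall_mem_range]

lemma le_fiberwiseMin_iff {f : C(Z × K, α)} {z : Z} {a : α} :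
    a ≤ fiberwiseMin f z ↔ ∀ u, a ≤ f (z, u) := by
  rw [le_isGLB_iff (isLeast_fiberwiseMin f z).isGLB, mem_lowerBounds, forall_mem_range]

end FiberwiseMin

section TrackMin

variable {J B Z K : Type*} [TopologicalSpace B] [TopologicalSpace Z] [TopologicalSpace K]
  [CompactSpace K] [Nonempty K]

/-- The minimum of the `j`-th function of a partition of unity along the track `u ↦ Γ (z, u)`. It is
positive exactly when the whole track lies in the support of that function. -/
def trackMin (ρ : PartitionOfUnity J B) (Γ : C(Z × K, B)) (j : J) : C(Z, ℝ) :=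
  fiberwiseMin ((ρ j).comp Γ)

variable (ρ : PartitionOfUnity J B) (Γ : C(Z × K, B))

lemma trackMin_nonneg (j : J) (z : Z) : 0 ≤ trackMin ρ Γ j z :=
  le_fiberwiseMin_iff.2 fun _ => ρ.nonneg j _

variable {ρ Γ} in
lemma trackMin_pos_iff {j : J} {z : Z} : 0 < trackMin ρ Γ j z ↔ ∀ u, 0 < ρ j (Γ (z, u)) :=
  lt_fiberwiseMin_iff

lemma trackMin_ne_zero_iff {j : J} {z : Z} :
    trackMin ρ Γ j z ≠ 0 ↔ ∀ u, 0 < ρ j (Γ (z, u)) := by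
  rw [← trackMin_pos_iff, (trackMin_nonneg ρ Γ j z).lt_iff_ne']

lemma locallyFinite_support_trackMin :
    LocallyFinite fun j => Function.support (trackMin ρ Γ j) := by
  obtain ⟨u⟩ := ‹Nonempty K›
  have hstart : Continuous fun z => Γ (z, u) := by fun_prop
  refine (ρ.locallyFinite.preimage_continuous hstart).subset fun j z hz => ?_
  exact ((trackMin_ne_zero_iff ρ Γ).1 hz u).ne'

lemma continuous_finsum_trackMin : Continuous fun z => ∑ᶠ j, trackMin ρ Γ j z :=
  continuous_finsum (fun j => (trackMin ρ Γ j).continuous) (locallyFinite_support_trackMin ρ Γ)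

variable {ρ Γ}

lemma finsum_trackMin_pos_iff {z : Z} :
    0 < ∑ᶠ j, trackMin ρ Γ j z ↔ ∃ j, ∀ u, 0 < ρ j (Γ (z, u)) := by
  constructor
  · intro h
    obtain ⟨j, hj⟩ : ∃ j, trackMin ρ Γ j z ≠ 0 := by
      by_contra! hzero
      exact h.ne' (finsum_eq_zero_of_forall_eq_zero hzero)
    exact ⟨j, (trackMin_ne_zero_iff ρ Γ).1 hj⟩
  · rintro ⟨j, hj⟩
    exact finsum_pos (fun j => trackMin_nonneg ρ Γ j z) ⟨j, trackMin_pos_iff.2 hj⟩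
      ((locallyFinite_support_trackMin ρ Γ).point_finite z)

lemma exists_partitionOfUnity_of_tracks (hΓ : ∀ z, ∃ j, ∀ u, 0 < ρ j (Γ (z, u))) :
    ∃ w : PartitionOfUnity J Z, ∀ j z, w j z ≠ 0 → ∀ u, 0 < ρ j (Γ (z, u)) := by
  have hsum_pos : ∀ z, 0 < ∑ᶠ j, trackMin ρ Γ j z := fun z => finsum_trackMin_pos_iff.2 (hΓ z)
  have hsum_div : ∀ z, ∑ᶠ j, trackMin ρ Γ j z / ∑ᶠ i, trackMin ρ Γ i z = 1 := fun z => by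
    simp only [div_eq_mul_inv]
    rw [← finsum_mul, mul_inv_cancel₀ (hsum_pos z).ne']
  refine ⟨{
    toFun j := ⟨fun z => trackMin ρ Γ j z / ∑ᶠ i, trackMin ρ Γ i z,
      (trackMin ρ Γ j).continuous.div (continuous_finsum_trackMin ρ Γ) fun z => (hsum_pos z).ne'⟩
    locallyFinite' := (locallyFinite_support_trackMin ρ Γ).subset fun j z hz =>
      left_ne_zero_of_mul hz
    nonneg' j z := div_nonneg (trackMin_nonneg ρ Γ j z) (hsum_pos z).le
    sum_eq_one' z _ := hsum_div z
    sum_le_one' z := (hsum_div z).le }, fun j z hz => ?_⟩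
  exact (trackMin_ne_zero_iff ρ Γ).1 (left_ne_zero_of_mul hz)

end TrackMin

section LebesgueNumber

variable {Y : Type*} [TopologicalSpace Y]

lemma exists_continuous_pos_le_of_pos_zero (N : C(Y × I, ℝ)) (hN : ∀ y, 0 < N (y, 0)) :
    ∃ δ : C(Y, ℝ), ∀ y, 0 < δ y ∧ ∃ ε : I, δ y ≤ ε ∧ 0 < N (y, ε) := by
  -- `δ y` is the maximum over `ε` of `min ε (N (y, ε))`.
  let m : C(Y × I, ℝ) := ⟨fun q => min (q.2 : ℝ) (N q), by fun_prop⟩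
  refine ⟨-fiberwiseMin (-m), fun y => ?_⟩
  have hpos : 0 < (-fiberwiseMin (-m)) y := by
    have : (𝓝[>] (0 : I)).NeBot := nhdsGT_neBot_of_exists_gt ⟨1, zero_lt_one⟩
    have hNy : Continuous fun ε : I => N (y, ε) := by fun_prop
    have hnear : ∀ᶠ ε in 𝓝[>] (0 : I), 0 < N (y, ε) :=
      nhdsWithin_le_nhds <| (hNy.tendsto 0).eventually_const_lt (hN y)
    obtain ⟨ε, hNε, hε⟩ := (hnear.and self_mem_nhdsWithin).exists
    have hm : 0 < m (y, ε) := lt_min hε hNε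
    exact hm.trans_le (le_neg.2 (fiberwiseMin_le (-m) y ε))
  obtain ⟨ε, hε⟩ := (isLeast_fiberwiseMin (-m) y).1
  have hδ : (-fiberwiseMin (-m)) y = min (ε : ℝ) (N (y, ε)) := neg_eq_iff_eq_neg.2 hε.symm
  exact ⟨hpos, ε, hδ.trans_le (min_le_left _ _), (lt_min_iff.1 (hδ ▸ hpos)).2⟩

lemma exists_continuous_lebesgue_number {J B : Type*} [TopologicalSpace B]
    (ρ : PartitionOfUnity J B) (h : C(Y × ℝ, B)) :
    ∃ δ : C(Y, ℝ), ∀ y, 0 < δ y ∧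
      ∀ s ∈ Icc (0 : ℝ) 1, ∃ j, ∀ t ∈ Icc s (s + δ y), 0 < ρ j (h (y, t)) := by
  let window : C(((Y × I) × I) × I, B) :=
    h.comp ⟨fun q => (q.1.1.1, (q.1.2 : ℝ) + q.2 * q.1.1.2), by fun_prop⟩
  let N : C(Y × I, ℝ) := fiberwiseMin ⟨_, continuous_finsum_trackMin ρ window⟩
  have hN {y : Y} {ε : I} :
      0 < N (y, ε) ↔ ∀ s : I, ∃ j, ∀ u : I, 0 < ρ j (h (y, s + u * ε)) :=
    lt_fiberwiseMin_iff.trans <| forall_congr' fun s => finsum_trackMin_pos_iff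
  have hN_zero : ∀ y, 0 < N (y, 0) := fun y => hN.2 fun s => by
    simpa using ρ.exists_pos (mem_univ (h (y, s)))
  obtain ⟨δ, hδ⟩ := exists_continuous_pos_le_of_pos_zero N hN_zero
  refine ⟨δ, fun y => ⟨(hδ y).1, fun s hs => ?_⟩⟩
  obtain ⟨hδ_pos, ε, hδε, hNε⟩ := hδ y
  obtain ⟨j, hj⟩ := hN.1 hNε ⟨s, hs⟩
  refine ⟨j, fun t ⟨hst, ht⟩ => ?_⟩
  have hε : (0 : ℝ) < ε := hδ_pos.trans_le hδε
  have hu : (t - s) / ε ∈ I :=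
    ⟨div_nonneg (sub_nonneg.2 hst) hε.le, (div_le_one hε).2 (by linarith)⟩
  simpa [div_mul_cancel₀ _ hε.ne'] using hj ⟨(t - s) / ε, hu⟩

end LebesgueNumber

section Stabilization

variable {X E : Type*} [TopologicalSpace X] [TopologicalSpace E]

lemma exists_continuousMap_eventually_eq {f : ℕ → C(X, E)}
    (hf : LocallyFinite fun n => {x | f (n + 1) x ≠ f n x}) :
    ∃ F : C(X, E), ∀ x, ∀ᶠ n in atTop, f n x = F x := by
  obtain ⟨F, hF⟩ :=
    LocallyFinite.exists_forall_eventually_atTop_eventuallyEq (f := fun n => ⇑(f n)) hf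
  refine ⟨⟨F, continuous_iff_continuousAt.2 fun x => ?_⟩,
    fun x => (hF x).mono fun n hn => hn.eq_of_nhds⟩
  obtain ⟨n, hn⟩ := (hF x).exists
  exact (f n).continuous.continuousAt.congr hn

lemma locallyFinite_setOf_natCast_mul_lt (a δ : C(X, ℝ)) (hδ : ∀ x, 0 < δ x) :
    LocallyFinite fun n : ℕ => {x | n * δ x < a x} := by
  intro x
  obtain ⟨N, hN⟩ := exists_nat_gt (a x / δ x)
  have hopen : IsOpen {y | a y < N * δ y} := isOpen_lt (by fun_prop) (by fun_prop)
  refine ⟨_, hopen.mem_nhds ((div_lt_iff₀ (hδ x)).1 hN), (finite_lt_nat N).subset ?_⟩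
  rintro n ⟨y, hny, hNy⟩
  exact_mod_cast lt_of_mul_lt_mul_right (hny.trans hNy) (hδ y).le

end Stabilization

section OrderedComposite

variable {J X : Type*}

lemma foldl_filter_of_fixed {f : J → X → X} {S : J → Set X}
    (hfS : ∀ i j x, f i x ∈ S j ↔ x ∈ S j) (hfix : ∀ j, ∀ x ∉ S j, f j x = x)
    {x : X} {P : J → Bool} (hP : ∀ j, P j ↔ x ∈ S j) (l : List J) :
    (l.filter P).foldl (fun x j => f j x) x = l.foldl (fun x j => f j x) x := by
  induction l generalizing x with
  | nil => rfl
  | cons j l ih =>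
    have ih' := ih (x := f j x) fun i => (hP i).trans (hfS j i x).symm
    by_cases hj : P j
    · rw [List.filter_cons_of_pos hj, List.foldl_cons, List.foldl_cons, ih']
    · rw [List.filter_cons_of_neg hj, List.foldl_cons, ← ih', hfix j x (mt (hP j).2 hj)]

variable [TopologicalSpace X]

lemma continuous_foldl {f : J → X → X} (hf : ∀ j, Continuous (f j)) (l : List J) :
    Continuous fun x => l.foldl (fun x j => f j x) x := by
  induction l with
  | nil => exact continuous_id
  | cons j l ih => exact ih.comp (hf j)

lemma exists_continuous_composite {f : J → X → X} {S : J → Set X}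
    (hf : ∀ j, Continuous (f j)) (hS : LocallyFinite S)
    (hfS : ∀ i j x, f i x ∈ S j ↔ x ∈ S j) (hfix : ∀ j, ∀ x ∉ S j, f j x = x) :
    ∃ F : C(X, X), ∀ x, ∃ l : List J,
      l.Nodup ∧ (∀ j, j ∈ l ↔ x ∈ S j) ∧ F x = l.foldl (fun x j => f j x) x := by
  classical
  -- One order on `J` for all points: near `x`, the composite is that of one finite list.
  let : LinearOrder J := linearOrderOfSTO WellOrderingRel
  let active (x : X) : List J := (hS.point_finite x).toFinset.sort
  have mem_active {x j} : j ∈ active x ↔ x ∈ S j := by simp [active]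
  suffices hcont : Continuous fun x => (active x).foldl (fun x j => f j x) x from
    ⟨⟨_, hcont⟩, fun x => ⟨active x, Finset.sort_nodup _ _, fun _ => mem_active, rfl⟩⟩
  refine continuous_iff_continuousAt.2 fun x => ?_
  obtain ⟨V, hV, hfin⟩ := hS x
  refine (continuous_foldl hf hfin.toFinset.sort).continuousAt.congr ?_
  filter_upwards [hV] with y hy
  have hactive : hfin.toFinset.sort.filter (y ∈ S ·) = active y := by
    refine ((Finset.sortedLT_sort _).pairwise.filter _).eq_of_mem_iff
      (Finset.sortedLT_sort _).pairwise fun j => ?_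
    rw [List.mem_filter, Finset.mem_sort, Finite.mem_toFinset, decide_eq_true_iff, mem_active]
    exact and_iff_right_of_imp fun hj => ⟨y, hj, hy⟩
  rw [← hactive, foldl_filter_of_fixed hfS hfix fun _ => decide_eq_true_iff]

end OrderedComposite

lemma sum_map_partitionOfUnity_eq_one {J Z : Type*} [TopologicalSpace Z]
    (w : PartitionOfUnity J Z) {z : Z} {l : List J} (hl : l.Nodup)
    (hmem : ∀ j, j ∈ l ↔ w j z ≠ 0) : (l.map (w · z)).sum = 1 := by
  classical
  rw [← List.sum_toFinset _ hl]
  refine w.sum_finsupport' (mem_univ z) fun j hj => ?_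
  rw [List.mem_toFinset, hmem]
  exact (w.mem_finsupport z).1 hj

/-- A slicing function for `p` over `U` (Hurewicz): `τ e b` carries `e` to the fibre over `b`, and
this is continuous in `(e, b)` as long as `p e` and `b` lie in `U`. The function is total; outside
of `U` only `τ e (p e) = e` is required. -/
structure SlicingFunction {E B : Type*} [TopologicalSpace E] [TopologicalSpace B] (p : E → B)
    (U : Set B) where
  toFun : E → B → E
  apply_proj : ∀ e, toFun e (p e) = e
  proj_apply : ∀ {e b}, p e ∈ U → b ∈ U → p (toFun e b) = b
  continuousOn : ContinuousOn (Function.uncurry toFun) ((p ⁻¹' U) ×ˢ U)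

namespace SlicingFunction

variable {E B : Type*} [TopologicalSpace E] [TopologicalSpace B] {p : E → B} {U : Set B}

instance : CoeFun (SlicingFunction p U) fun _ => E → B → E := ⟨toFun⟩

open Classical in
/-- The slicing function that keeps the fibre coordinate of a local trivialization fixed. -/
def ofHomeomorph {F : Type*} [TopologicalSpace F] (φ : (U × F) ≃ₜ (p ⁻¹' U : Set E))
    (hφ : ∀ (b : U) (x : F), p (φ (b, x)) = b) : SlicingFunction p U where
  toFun e b := if h : p e ∈ U ∧ b ∈ U then φ (⟨b, h.2⟩, (φ.symm ⟨e, h.1⟩).2) else e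
  apply_proj e := by
    split_ifs with h
    · have hbase : (φ.symm ⟨e, h.1⟩).1 = ⟨p e, h.1⟩ := Subtype.ext <| by
        simpa using (hφ (φ.symm ⟨e, h.1⟩).1 (φ.symm ⟨e, h.1⟩).2).symm
      rw [← hbase, Prod.mk.eta, Homeomorph.apply_symm_apply]
    · rfl
  proj_apply he hb := by
    rw [dif_pos ⟨he, hb⟩]
    exact hφ _ _
  continuousOn := by
    rw [continuousOn_iff_continuous_domRestrict]
    have hcont : Continuous fun q : (p ⁻¹' U) ×ˢ U =>
        (φ (⟨q.1.2, q.2.2⟩, (φ.symm ⟨q.1.1, q.2.1⟩).2) : E) := by fun_prop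
    refine hcont.congr fun q => ?_
    have hq : p q.1.1 ∈ U ∧ q.1.2 ∈ U := q.2
    rw [domRestrict_apply, Function.uncurry, dif_pos hq]

lemma proj_apply_of_ne (τ : SlicingFunction p U) {e : E} {b : B}
    (h : p e ≠ b → p e ∈ U ∧ b ∈ U) : p (τ e b) = b := by
  by_cases heq : p e = b
  · rw [← heq, τ.apply_proj]
  · exact τ.proj_apply (h heq).1 (h heq).2

lemma continuous_comp (τ : SlicingFunction p U) (hp : Continuous p) (hU : IsOpen U) {C : Set B}
    (hC : IsClosed C) (hCU : C ⊆ U) {X : Type*} [TopologicalSpace X] {g : X → E} {β : X → B}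
    (hg : Continuous g) (hβ : Continuous β)
    (hgβ : ∀ x, p (g x) ≠ β x → p (g x) ∈ C ∧ β x ∈ C) :
    Continuous fun x => τ (g x) (β x) := by
  -- `τ` may be discontinuous on the boundary of `U`, but away from `C` it leaves `g` unchanged.
  refine continuous_iff_continuousAt.2 fun x => ?_
  by_cases hx : p (g x) ∈ U ∧ β x ∈ U
  · have hτ : ContinuousAt (Function.uncurry τ) (g x, β x) :=
      τ.continuousOn.continuousAt (((hU.preimage hp).prod hU).mem_nhds hx)
    exact hτ.comp (f := fun x => (g x, β x)) (by fun_prop)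
  · have hclosed : IsClosed {x | p (g x) ∈ C ∧ β x ∈ C} :=
      (hC.preimage (hp.comp hg)).inter (hC.preimage hβ)
    have hidle : ∀ᶠ y in 𝓝 x, g y = τ (g y) (β y) := by
      filter_upwards [hclosed.isOpen_compl.mem_nhds fun h => hx ⟨hCU h.1, hCU h.2⟩] with y hy
      have heq : p (g y) = β y := not_not.1 fun hne => hy (hgβ y hne)
      rw [← heq, τ.apply_proj]
    exact hg.continuousAt.congr hidle

section Advance

variable {Z : Type*} {Γ : Z × ℝ → B} {w : Z → ℝ}

/-- Acting on triples `(e, z, t)` with `e` over `Γ (z, t)`: advance the time `t` by `w z` and carry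
`e` along. -/
def advance (τ : SlicingFunction p U) (hw : ∀ z, w z ≠ 0 → ∀ t, Γ (z, t) ∈ U)
    (x : p.Pullback Γ) : p.Pullback Γ :=
  ⟨(τ x.fst (Γ (x.snd.1, x.snd.2 + w x.snd.1)), (x.snd.1, x.snd.2 + w x.snd.1)),
    τ.proj_apply_of_ne fun hne => by
      have hz : w x.snd.1 ≠ 0 := fun hzero => hne <| by rw [hzero, add_zero]; exact x.2
      exact ⟨x.2 ▸ hw _ hz _, hw _ hz _⟩⟩

variable (τ : SlicingFunction p U) (hw : ∀ z, w z ≠ 0 → ∀ t, Γ (z, t) ∈ U) (x : p.Pullback Γ)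

lemma snd_advance : (τ.advance hw x).snd = (x.snd.1, x.snd.2 + w x.snd.1) := rfl

variable {x} in
lemma fst_advance_of_eq (h : ∀ t, Γ (x.snd.1, t) = Γ x.snd) : (τ.advance hw x).fst = x.fst := by
  have hx : p x.fst = Γ x.snd := x.2
  change τ x.fst (Γ _) = _
  rw [h, ← hx, τ.apply_proj]

variable {x} in
lemma advance_of_eq_zero (h : w x.snd.1 = 0) : τ.advance hw x = x := by
  have hx : p x.fst = Γ x.snd := x.2
  have hsnd : (x.snd.1, x.snd.2 + w x.snd.1) = x.snd := by rw [h, add_zero]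
  refine Subtype.ext (Prod.ext ?_ hsnd)
  change τ x.fst (Γ _) = _
  rw [hsnd, ← hx]
  exact τ.apply_proj _

lemma continuous_advance [TopologicalSpace Z] (hp : Continuous p) (hU : IsOpen U)
    (hΓ : Continuous Γ) (hw_cont : Continuous w) {C : Set B} (hC : IsClosed C) (hCU : C ⊆ U)
    (hwC : ∀ z, w z ≠ 0 → ∀ t, Γ (z, t) ∈ C) : Continuous (τ.advance hw) := by
  have hfst : Continuous fun x : p.Pullback Γ => x.fst := continuous_fst.comp continuous_subtype_val
  have hsnd : Continuous fun x : p.Pullback Γ => (x.snd.1, x.snd.2 + w x.snd.1) := by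
    have : Continuous fun x : p.Pullback Γ => x.snd := continuous_snd.comp continuous_subtype_val
    fun_prop
  refine ((τ.continuous_comp hp hU hC hCU hfst (hΓ.comp hsnd) fun x hne => ?_).prodMk
    hsnd).subtype_mk _
  have hz : w x.snd.1 ≠ 0 := fun hzero => hne <| by
    rw [Function.comp_apply, hzero, add_zero]
    exact x.2
  exact ⟨x.2 ▸ hwC _ hz _, hwC _ hz _⟩

end Advance

section AdvanceFoldl

variable {J Z : Type*} {U : J → Set B} {Γ : Z × ℝ → B} {w : J → Z → ℝ}
  (τ : ∀ j, SlicingFunction p (U j)) (hw : ∀ j z, w j z ≠ 0 → ∀ t, Γ (z, t) ∈ U j)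

lemma snd_foldl_advance (l : List J) (x : p.Pullback Γ) :
    (l.foldl (fun x j => (τ j).advance (hw j) x) x).snd =
      (x.snd.1, x.snd.2 + (l.map (w · x.snd.1)).sum) := by
  induction l generalizing x with
  | nil => simp
  | cons j l ih =>
    simp only [List.foldl_cons, ih, snd_advance, List.map_cons, List.sum_cons, add_assoc]

lemma fst_foldl_advance_of_forall_eq (l : List J) {x : p.Pullback Γ}
    (h : ∀ t, Γ (x.snd.1, t) = Γ x.snd) :
    (l.foldl (fun x j => (τ j).advance (hw j) x) x).fst = x.fst := by
  induction l generalizing x with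
  | nil => rfl
  | cons j l ih =>
    have hj : ∀ t, Γ (((τ j).advance (hw j) x).snd.1, t) = Γ ((τ j).advance (hw j) x).snd :=
      fun t => (h t).trans (h _).symm
    rw [List.foldl_cons, ih hj, fst_advance_of_eq _ _ h]

end AdvanceFoldl

lemma exists_continuous_advance_composite {J Z : Type*} [TopologicalSpace Z] {U C : J → Set B}
    (τ : ∀ j, SlicingFunction p (U j)) (hp : Continuous p) {Γ : Z × ℝ → B}
    (hU : ∀ j, IsOpen (U j)) (hΓ : Continuous Γ) (w : PartitionOfUnity J Z)
    (hC : ∀ j, IsClosed (C j)) (hCU : ∀ j, C j ⊆ U j)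
    (hwC : ∀ j z, w j z ≠ 0 → ∀ t, Γ (z, t) ∈ C j) :
    ∃ T : C(p.Pullback Γ, p.Pullback Γ), ∀ x, (T x).snd = (x.snd.1, x.snd.2 + 1) ∧
      ((∀ t, Γ (x.snd.1, t) = Γ x.snd) → (T x).fst = x.fst) := by
  have hwU : ∀ j z, w j z ≠ 0 → ∀ t, Γ (z, t) ∈ U j := fun j z hz t => hCU j (hwC j z hz t)
  have hz : Continuous fun x : p.Pullback Γ => x.snd.1 :=
    continuous_fst.comp (continuous_snd.comp continuous_subtype_val)
  obtain ⟨T, hT⟩ := exists_continuous_composite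
    (f := fun j => (τ j).advance (hwU j)) (S := fun j => {x | w j x.snd.1 ≠ 0})
    (fun j => (τ j).continuous_advance (hwU j) hp (hU j) hΓ (w j).continuous (hC j) (hCU j)
      (hwC j))
    (w.locallyFinite.preimage_continuous hz) (fun _ _ _ => Iff.rfl)
    fun j x hx => (τ j).advance_of_eq_zero (hwU j) (not_not.1 hx)
  refine ⟨T, fun x => ?_⟩
  obtain ⟨l, hl, hmem, hTl⟩ := hT x
  rw [hTl, snd_foldl_advance, sum_map_partitionOfUnity_eq_one w hl hmem]
  exact ⟨rfl, fst_foldl_advance_of_forall_eq τ hwU l⟩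

end SlicingFunction

section Lifting

variable {J E B Y : Type*} [TopologicalSpace E] [TopologicalSpace B] [TopologicalSpace Y]

/-- The homotopy with time parameter in `ℝ` that is constant before time `0` and after time `1`. -/
def extendTime (Γ : C(Y × I, B)) : C(Y × ℝ, B) :=
  Γ.comp ((ContinuousMap.id Y).prodMap projIccCM)

lemma extendTime_apply_coe (Γ : C(Y × I, B)) (y : Y) (t : I) :
    extendTime Γ (y, t) = Γ (y, t) :=
  congrArg (fun u => Γ (y, u)) (projIcc_val zero_le_one t)

variable {p : C(E, B)} {U : J → Set B} {ρ : PartitionOfUnity J B}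

lemma exists_lift_end_of_tracks (hU : ∀ j, IsOpen (U j)) (hρ : ρ.IsSubordinate U)
    (τ : ∀ j, SlicingFunction p (U j)) (Γ : C(Y × I, B))
    (hΓ : ∀ y, ∃ j, ∀ u, 0 < ρ j (Γ (y, u))) (g : C(Y, E)) (hg : ∀ y, p (g y) = Γ (y, 0)) :
    ∃ g' : C(Y, E), ∀ y, p (g' y) = Γ (y, 1) ∧ ((∀ u, Γ (y, u) = Γ (y, 0)) → g' y = g y) := by
  obtain ⟨w, hw⟩ := exists_partitionOfUnity_of_tracks hΓ
  obtain ⟨T, hT⟩ := SlicingFunction.exists_continuous_advance_composite τ p.continuous hU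
    (extendTime Γ).continuous w (fun j => isClosed_tsupport (ρ j)) hρ
    fun j y hy t => subset_tsupport _ (hw j y hy _).ne'
  let start : C(Y, Function.Pullback p (extendTime Γ)) :=
    ⟨fun y => ⟨(g y, y, 0), (hg y).trans (extendTime_apply_coe Γ y 0).symm⟩, by fun_prop⟩
  refine ⟨⟨fun y => (T (start y)).fst, continuous_fst.comp <| continuous_subtype_val.comp <|
    T.continuous.comp start.continuous⟩, fun y => ⟨?_, fun hconst => ?_⟩⟩
  · calc p (T (start y)).fst = extendTime Γ (T (start y)).snd := (T (start y)).2
      _ = extendTime Γ (y, 0 + 1) := by rw [(hT (start y)).1]; rfl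
      _ = Γ (y, 1) := by rw [zero_add]; exact extendTime_apply_coe Γ y 1
  · exact (hT (start y)).2 fun t => (hconst _).trans (hconst _).symm

lemma exists_lift_extension (hU : ∀ j, IsOpen (U j)) (hρ : ρ.IsSubordinate U)
    (τ : ∀ j, SlicingFunction p (U j)) {h : C(Y × ℝ, B)} {c δ : C(Y, ℝ)} (hc : ∀ y, 0 ≤ c y)
    (hδ_pos : ∀ y, 0 < δ y)
    (hδ : ∀ y, ∀ s ∈ Icc (0 : ℝ) 1, ∃ j, ∀ t ∈ Icc s (s + δ y), 0 < ρ j (h (y, t)))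
    (g : C(Y × I, E)) (hg : ∀ y t, p (g (y, t)) = h (y, min ↑t (c y))) :
    ∃ g' : C(Y × I, E), ∀ y (t : I), p (g' (y, t)) = h (y, min ↑t (c y + δ y)) ∧
      (t ≤ c y → g' (y, t) = g (y, t)) := by
  let Γ : C((Y × I) × I, B) :=
    h.comp ⟨fun q => (q.1.1, min (q.1.2 : ℝ) (c q.1.1 + q.2 * δ q.1.1)), by fun_prop⟩
  have hΓ : ∀ z, ∃ j, ∀ u, 0 < ρ j (Γ (z, u)) := fun ⟨y, t⟩ => by
    obtain ⟨j, hj⟩ := hδ y (min ↑t (c y))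
      ⟨le_min t.2.1 (hc y), (min_le_left _ _).trans t.2.2⟩
    refine ⟨j, fun u => hj _ ⟨min_le_min_left _ ?_, ?_⟩⟩
    · exact le_add_of_nonneg_right (mul_nonneg u.2.1 (hδ_pos y).le)
    · rw [min_add]
      exact min_le_min (le_add_of_nonneg_right (hδ_pos y).le)
        (by gcongr; exact mul_le_of_le_one_left (hδ_pos y).le u.2.2)
  obtain ⟨g', hg'⟩ := exists_lift_end_of_tracks hU hρ τ Γ hΓ g fun ⟨y, t⟩ => by
    simpa [Γ] using hg y t
  refine ⟨g', fun y t => ⟨by simpa [Γ] using (hg' (y, t)).1, fun ht => (hg' (y, t)).2 fun u => ?_⟩⟩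
  have htime (u : I) : min (t : ℝ) (c y + u * δ y) = t :=
    min_eq_left (ht.trans (le_add_of_nonneg_right (mul_nonneg u.2.1 (hδ_pos y).le)))
  simp only [Γ, ContinuousMap.comp_apply, ContinuousMap.coe_mk, htime]

lemma exists_lift_sequence (hU : ∀ j, IsOpen (U j)) (hρ : ρ.IsSubordinate U)
    (τ : ∀ j, SlicingFunction p (U j)) {h : C(Y × ℝ, B)} {δ : C(Y, ℝ)} (hδ_pos : ∀ y, 0 < δ y)
    (hδ : ∀ y, ∀ s ∈ Icc (0 : ℝ) 1, ∃ j, ∀ t ∈ Icc s (s + δ y), 0 < ρ j (h (y, t)))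
    (f : C(Y, E)) (hf : ∀ y, p (f y) = h (y, 0)) :
    ∃ G : ℕ → C(Y × I, E), (∀ y t, G 0 (y, t) = f y) ∧
      (∀ n y t, p (G n (y, t)) = h (y, min ↑t (n * δ y))) ∧
      ∀ (n : ℕ) y (t : I), (t : ℝ) ≤ n * δ y → G (n + 1) (y, t) = G n (y, t) := by
  let G₀ : C(Y × I, E) := f.comp ContinuousMap.fst
  have : Nonempty C(Y × I, E) := ⟨G₀⟩
  have hstep (n : ℕ) := exists_lift_extension hU hρ τ
    (c := (n : ℝ) • δ) (fun y => mul_nonneg n.cast_nonneg (hδ_pos y).le) hδ_pos hδ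
  choose! next hnext using hstep
  let G (n : ℕ) : C(Y × I, E) := n.rec G₀ next
  have hG : ∀ n y t, p (G n (y, t)) = h (y, min ↑t (n * δ y)) := by
    intro n
    induction n with
    | zero =>
      intro y t
      simpa [G, G₀, t.2.1] using hf y
    | succ n ih =>
      intro y t
      rw [Nat.cast_succ, add_one_mul]
      exact (hnext n _ ih y t).1
  exact ⟨G, fun _ _ => rfl, hG, fun n y t => (hnext n _ (hG n) y t).2⟩

end Lifting

theorem fibreBundle_isFibration_of_paracompact_t2_general {J E B : Type*} [TopologicalSpace E]
    [TopologicalSpace B] (p : C(E, B)) {U : J → Set B} (hU : ∀ j, IsOpen (U j))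
    (ρ : PartitionOfUnity J B) (hρ : ρ.IsSubordinate U) (τ : ∀ j, SlicingFunction p (U j)) :
    IsFibration.{v} p := by
  intro Y _ f h hf
  obtain ⟨δ, hδ⟩ := exists_continuous_lebesgue_number ρ (extendTime h)
  obtain ⟨G, hG_zero, hG_lift, hG_succ⟩ := exists_lift_sequence hU hρ τ (fun y => (hδ y).1)
    (fun y => (hδ y).2) f fun y => (hf y).symm.trans (extendTime_apply_coe h y 0).symm
  have hG_locallyFinite : LocallyFinite fun n => {z | G (n + 1) z ≠ G n z} :=
    (locallyFinite_setOf_natCast_mul_lt ⟨fun z : Y × I => (z.2 : ℝ), by fun_prop⟩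
      (δ.comp ContinuousMap.fst) fun z => (hδ z.1).1).subset
      fun n z hz => not_le.1 (mt (hG_succ n z.1 z.2) hz)
  obtain ⟨H, hH⟩ := exists_continuousMap_eventually_eq hG_locallyFinite
  refine ⟨H, fun ⟨y, t⟩ => ?_, fun y => ?_⟩
  · have hlarge : ∀ᶠ n : ℕ in atTop, (t : ℝ) ≤ n * δ y :=
      (tendsto_natCast_atTop_atTop.atTop_mul_const (hδ y).1).eventually_ge_atTop _
    obtain ⟨n, hn, ht⟩ := ((hH (y, t)).and hlarge).exists
    rw [← hn, hG_lift, min_eq_left ht, extendTime_apply_coe]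
  · have hG_start : ∀ n, G n (y, 0) = f y := fun n => by
      induction n with
      | zero => exact hG_zero y 0
      | succ n ih => exact (hG_succ n y 0 (mul_nonneg n.cast_nonneg (hδ y).1.le)).trans ih
    obtain ⟨n, hn⟩ := (hH (y, 0)).exists
    exact hn.symm.trans (hG_start n)

/-- A fibre bundle over a paracompact Hausdorff base is a fibration. -/
theorem fibreBundle_isFibration_of_paracompact_t2
    {E B : Type u} (F : Type u) [TopologicalSpace E] [TopologicalSpace B] [TopologicalSpace F]
    [ParacompactSpace B] [T2Space B]
    (p : C(E, B)) (hp : IsFibreBundleProj F p) :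
    IsFibration.{v} p := by
  choose U hU hbU φ hφ using hp
  obtain ⟨ρ, hρ⟩ := PartitionOfUnity.exists_isSubordinate isClosed_univ U hU
    fun b _ => mem_iUnion.2 ⟨b, hbU b⟩
  exact fibreBundle_isFibration_of_paracompact_t2_general p hU ρ hρ
    fun b => .ofHomeomorph (φ b) (hφ b)
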